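/- (Wick's theorem) For every natural number n, every real number α > 0, every symmetric positive-definite real n×n matrix Q, every k ∈ ℕ, and every choice of indices μ₁,…,μ_{2k} ∈ {1,…,n}, the normalized Gaussian moment satisfies ⟨x^{μ₁} x^{μ₂} ⋯ x^{μ_{2k}}⟩ = (1/(2^k · k! · α^k)) · ∑_{P ∈ S_{2k}} (Q⁻¹)^{μ_{P(1)} μ_{P(2)}} · (Q⁻¹)^{μ_{P(3)} μ_{P(4)}} ⋯ (Q⁻¹)^{μ_{P(2k−1)} μ_{P(2k)}}, where the sum runs over all permutations P of {1,…,2k}. -/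

import Mathlib

open MeasureTheory

/-!
Integration by parts against the weight `exp (-½ xᵀAx)`, in a direction `v` with `A v = e_a`, trades
the factor `x_a` of a monomial for the sum of its contractions `A⁻¹ a b` with the other factors
`x_b`. Averaging this recursion over all orderings of the factors makes every contraction contribute
equally, and what accumulates after `k` steps is a sum over `S_{2k}`; matching factorials gives the
constant `1 / (2 ^ k * k!)`. The parameter `α` enters only through `A = α • Q`.
-/

section Pairings

variable {ι R : Type*} [CommSemiring R]

/-- The sum over `S_{2k}` on the right-hand side of Wick's theorem. Each perfect matching of the
`2k` positions is counted `2 ^ k * k!` times (for symmetric `C`), so this is that multiple of the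
hafnian of the matrix `C (μ i) (μ j)`. Positions are numbered from `0`, hence the pairs
`(2 * j, 2 * j + 1)`. -/
def pairingSum (C : Matrix ι ι R) {k : ℕ} (μ : Fin (2 * k) → ι) : R :=
  ∑ P : Equiv.Perm (Fin (2 * k)), ∏ j : Fin k,
    C (μ (P ⟨2 * j, by lia⟩)) (μ (P ⟨2 * j + 1, by lia⟩))

lemma pairingSum_zero (C : Matrix ι ι R) (μ : Fin (2 * 0) → ι) : pairingSum C μ = 1 := by
  simp [pairingSum]

lemma pairingSum_smul (c : R) (C : Matrix ι ι R) {k : ℕ} (μ : Fin (2 * k) → ι) :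
    pairingSum (c • C) μ = c ^ k * pairingSum C μ := by
  simp [pairingSum, Finset.prod_mul_distrib, Finset.mul_sum]

lemma pairingSum_succ (C : Matrix ι ι R) {k : ℕ} (μ : Fin (2 * k + 2) → ι) :
    pairingSum C (k := k + 1) μ =
      ∑ P : Equiv.Perm (Fin (2 * k + 2)), C (μ (P 0)) (μ (P 1)) *
        ∏ j : Fin k, C (μ (P (Fin.mk (2 * j) (by lia) : Fin (2 * k)).succ.succ))
          (μ (P (Fin.mk (2 * j + 1) (by lia) : Fin (2 * k)).succ.succ)) :=
  Finset.sum_congr rfl fun _ _ => Fin.prod_univ_succ _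

lemma sum_perm_mul_pairingSum (C : Matrix ι ι R) {k : ℕ} (μ : Fin (2 * k + 2) → ι) :
    ∑ P : Equiv.Perm (Fin (2 * k + 2)), C (μ (P 0)) (μ (P 1)) *
        pairingSum C (fun i : Fin (2 * k) => μ (P i.succ.succ)) =
      (2 * k).factorial * pairingSum C (k := k + 1) μ := by
  have absorb_tail (T : Equiv.Perm (Fin (2 * k))) :
      ∑ P : Equiv.Perm (Fin (2 * k + 2)), C (μ (P 0)) (μ (P 1)) *
        ∏ j : Fin k, C (μ (P (T ⟨2 * j, by lia⟩).succ.succ))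
          (μ (P (T ⟨2 * j + 1, by lia⟩).succ.succ)) = pairingSum C (k := k + 1) μ := by
    let σ : Equiv.Perm (Fin (2 * k + 2)) :=
      Equiv.Perm.decomposeFin.symm (0, Equiv.Perm.decomposeFin.symm (0, T))
    rw [eq_comm, pairingSum_succ, ← Equiv.sum_comp (Equiv.mulRight σ)]
    simp [σ, -Fin.succ_mk]
  calc
    _ = ∑ T : Equiv.Perm (Fin (2 * k)), ∑ P : Equiv.Perm (Fin (2 * k + 2)),
          C (μ (P 0)) (μ (P 1)) * ∏ j : Fin k, C (μ (P (T ⟨2 * j, by lia⟩).succ.succ))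
            (μ (P (T ⟨2 * j + 1, by lia⟩).succ.succ)) := by
      simp_rw [pairingSum, Finset.mul_sum]
      exact Finset.sum_comm
    _ = ∑ _ : Equiv.Perm (Fin (2 * k)), pairingSum C (k := k + 1) μ :=
      Finset.sum_congr rfl fun T _ => absorb_tail T
    _ = (2 * k).factorial * pairingSum C (k := k + 1) μ := by simp [Fintype.card_perm]

/-- The recursion that characterises the moments of a Gaussian with covariance `C`: the functions
`M m` are symmetric, and the first index may be contracted with each of the others in turn. -/
structure WickRecursion (C : Matrix ι ι R) (M : (m : ℕ) → (Fin m → ι) → R) : Prop where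
  comp_perm {m : ℕ} (μ : Fin m → ι) (P : Equiv.Perm (Fin m)) : M m (μ ∘ P) = M m μ
  contract_zero {m : ℕ} (μ : Fin (m + 2) → ι) : M (m + 2) μ =
    ∑ j : Fin (m + 1), C (μ 0) (μ j.succ) * M m (fun i => μ (j.succAbove i).succ)

namespace WickRecursion

variable {C : Matrix ι ι R} {M : (m : ℕ) → (Fin m → ι) → R}

lemma factorial_mul_eq_sum_perm (h : WickRecursion C M) {m : ℕ} (μ : Fin (m + 2) → ι) :
    (m + 2).factorial * M (m + 2) μ = (m + 1) * ∑ P : Equiv.Perm (Fin (m + 2)),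
      C (μ (P 0)) (μ (P 1)) * M m (fun i => μ (P i.succ.succ)) := by
  have move_to_front (j : Fin (m + 1)) :
      ∑ P : Equiv.Perm (Fin (m + 2)),
          C (μ (P 0)) (μ (P j.succ)) * M m (fun i => μ (P (j.succAbove i).succ)) =
        ∑ P : Equiv.Perm (Fin (m + 2)),
          C (μ (P 0)) (μ (P 1)) * M m (fun i => μ (P i.succ.succ)) := by
    let σ : Equiv.Perm (Fin (m + 2)) := Equiv.Perm.decomposeFin.symm (0, j.cycleRange.symm)
    rw [← Equiv.sum_comp (Equiv.mulRight σ) fun P => C (μ (P 0)) (μ (P 1)) * _]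
    simp [σ]
  calc (m + 2).factorial * M (m + 2) μ
      = ∑ P : Equiv.Perm (Fin (m + 2)), M (m + 2) (μ ∘ P) := by
        simp [h.comp_perm, Fintype.card_perm]
    _ = ∑ P : Equiv.Perm (Fin (m + 2)), ∑ j : Fin (m + 1),
          C (μ (P 0)) (μ (P j.succ)) * M m (fun i => μ (P (j.succAbove i).succ)) :=
        Finset.sum_congr rfl fun P _ => h.contract_zero _
    _ = (m + 1) * ∑ P : Equiv.Perm (Fin (m + 2)),
          C (μ (P 0)) (μ (P 1)) * M m (fun i => μ (P i.succ.succ)) := by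
        rw [Finset.sum_comm]
        simp [move_to_front]

theorem two_pow_mul_factorial_mul_eq_pairingSum_mul [IsCancelMulZero R] [CharZero R]
    (h : WickRecursion C M) {k : ℕ} (μ : Fin (2 * k) → ι) :
    2 ^ k * k.factorial * M (2 * k) μ = pairingSum C μ * M 0 Fin.elim0 := by
  induction k with
  | zero =>
    have hμ : M (2 * 0) μ = M 0 Fin.elim0 :=
      congrArg (M 0) (Subsingleton.elim (α := Fin 0 → ι) μ Fin.elim0)
    simp [pairingSum_zero, hμ]
  | succ k ih =>
    have factorial_ne_zero : ((2 * k + 1).factorial : R) ≠ 0 :=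
      Nat.cast_ne_zero.2 (Nat.factorial_ne_zero _)
    apply mul_left_cancel₀ factorial_ne_zero
    calc (2 * k + 1).factorial * (2 ^ (k + 1) * (k + 1).factorial * M (2 * k + 2) μ)
        = 2 ^ k * k.factorial * ((2 * k + 2).factorial * M (2 * k + 2) μ) := by
          simp only [Nat.factorial_succ]
          push_cast
          ring
      _ = (2 * k + 1) * ∑ P : Equiv.Perm (Fin (2 * k + 2)), C (μ (P 0)) (μ (P 1)) *
            (2 ^ k * k.factorial * M (2 * k) (fun i => μ (P i.succ.succ))) := by
          rw [h.factorial_mul_eq_sum_perm]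
          simp only [mul_left_comm _ (2 ^ k * _ : R), ← Finset.mul_sum]
          push_cast
          rfl
      _ = (2 * k + 1) * ((2 * k).factorial * pairingSum C (k := k + 1) μ) * M 0 Fin.elim0 := by
          simp_rw [ih, ← mul_assoc, ← Finset.sum_mul]
          rw [sum_perm_mul_pairingSum]
          simp only [mul_assoc]
      _ = (2 * k + 1).factorial * (pairingSum C (k := k + 1) μ * M 0 Fin.elim0) := by
          rw [Nat.factorial_succ]
          push_cast
          simp only [mul_assoc]

end WickRecursion

end Pairings

section Gaussian

open scoped Matrix

lemma integrable_pow_mul_exp_neg_mul_sq {b : ℝ} (hb : 0 < b) (p : ℕ) :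
    Integrable fun t : ℝ => t ^ p * Real.exp (-b * t ^ 2) := by
  simpa only [Real.rpow_natCast] using
    integrable_rpow_mul_exp_neg_mul_sq hb (s := p) (neg_one_lt_zero.trans_le p.cast_nonneg)

lemma hasLineDerivAt_prod_apply {ι : Type*} {m : ℕ} (μ : Fin (m + 1) → ι) (x v : ι → ℝ) :
    HasLineDerivAt ℝ (fun y : ι → ℝ => ∏ i, y (μ i))
      (∑ j, v (μ j) * ∏ i, x (μ (j.succAbove i))) x v := by
  have hasDerivAt_apply (a : ι) : HasDerivAt (fun t : ℝ => (x + t • v) a) (v a) 0 := by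
    simpa using ((hasDerivAt_id (0 : ℝ)).mul_const (v a)).const_add (x a)
  refine (HasDerivAt.fun_finsetProd (u := Finset.univ)
    fun i _ => hasDerivAt_apply (μ i)).congr_deriv (Finset.sum_congr rfl fun j _ => ?_)
  rw [Fin.univ_succAbove m j, Finset.erase_cons, Finset.prod_map]
  simp [mul_comm]

variable {ι : Type*} [Fintype ι]

/-- The unnormalized density of the centred Gaussian with precision matrix `A`. -/
noncomputable def gaussianWeight (A : Matrix ι ι ℝ) (x : ι → ℝ) : ℝ :=
  Real.exp (-(1 / 2) * (x ⬝ᵥ A *ᵥ x))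

/-- The moment `∫ ∏ i, x (μ i)` against `gaussianWeight A`, without the factor `Z[0]⁻¹`. -/
noncomputable def gaussianMoment (A : Matrix ι ι ℝ) {κ : Type*} [Fintype κ] (μ : κ → ι) : ℝ :=
  ∫ x : ι → ℝ, (∏ i, x (μ i)) * gaussianWeight A x

lemma gaussianWeight_smul (α : ℝ) (Q : Matrix ι ι ℝ) (x : ι → ℝ) :
    gaussianWeight (α • Q) x = Real.exp (-(α / 2) * ∑ a, ∑ b, Q a b * x a * x b) := by
  simp only [gaussianWeight, dotProduct, Matrix.mulVec, Matrix.smul_apply, smul_eq_mul,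
    Finset.mul_sum]
  congr! 3 with a _ b _
  ring

@[fun_prop]
lemma continuous_gaussianWeight (A : Matrix ι ι ℝ) : Continuous (gaussianWeight A) := by
  unfold gaussianWeight
  fun_prop

open scoped MatrixOrder Matrix.Norms.L2Operator in
lemma exists_pos_mul_dotProduct_self_le {A : Matrix ι ι ℝ} (hA : A.PosDef) :
    ∃ c > 0, ∀ x : ι → ℝ, c * (x ⬝ᵥ x) ≤ x ⬝ᵥ A *ᵥ x := by
  classical
  cases isEmpty_or_nonempty ι
  · exact ⟨1, one_pos, by simp⟩
  obtain ⟨c, hc, hcA⟩ := (CFC.exists_pos_algebraMap_le_iff hA.isHermitian).2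
    fun r hr => hA.isStrictlyPositive.spectrum_pos hr
  refine ⟨c, hc, fun x => ?_⟩
  simpa [Matrix.sub_mulVec, dotProduct_sub, Algebra.algebraMap_eq_smul_one, Matrix.smul_mulVec]
    using (Matrix.le_iff.1 hcA).dotProduct_mulVec_nonneg x

lemma integrable_prod_mul_gaussianWeight {A : Matrix ι ι ℝ} (hA : A.PosDef) {κ : Type*} [Fintype κ]
    (μ : κ → ι) : Integrable fun x : ι → ℝ => (∏ i, x (μ i)) * gaussianWeight A x := by
  classical
  obtain ⟨c, hc, hcA⟩ := exists_pos_mul_dotProduct_self_le hA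
  let p (a : ι) : ℕ := (Finset.univ.filter fun i => μ i = a).card
  have monomial_eq (x : ι → ℝ) : ∏ a, x a ^ p a = ∏ i, x (μ i) := by
    simp [p, ← Finset.prod_fiberwise' Finset.univ μ x]
  have integrable_product : Integrable fun x : ι → ℝ =>
      ∏ a, (x a ^ p a * Real.exp (-(c / 2) * x a ^ 2)) :=
    Integrable.fintype_prod (f := fun a t => t ^ p a * Real.exp (-(c / 2) * t ^ 2))
      fun a => integrable_pow_mul_exp_neg_mul_sq (half_pos hc) (p a)
  refine integrable_product.mono (by fun_prop) (.of_forall fun x => ?_)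
  rw [Finset.prod_mul_distrib, monomial_eq, norm_mul, norm_mul, ← Real.exp_sum, ← Finset.mul_sum,
    gaussianWeight, Real.norm_of_nonneg (Real.exp_nonneg _),
    Real.norm_of_nonneg (Real.exp_nonneg _)]
  gcongr ‖_‖ * Real.exp ?_
  have := hcA x
  simp only [dotProduct, ← sq] at this ⊢
  linarith

lemma integrable_gaussianWeight {A : Matrix ι ι ℝ} (hA : A.PosDef) :
    Integrable (gaussianWeight A) := by
  simpa using integrable_prod_mul_gaussianWeight hA (κ := Empty) nofun

lemma integral_gaussianWeight_pos {A : Matrix ι ι ℝ} (hA : A.PosDef) :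
    0 < ∫ x, gaussianWeight A x :=
  integral_exp_pos (integrable_gaussianWeight hA)

lemma hasLineDerivAt_gaussianWeight {A : Matrix ι ι ℝ} (hA : A.IsSymm) (x v : ι → ℝ) :
    HasLineDerivAt ℝ (gaussianWeight A) (-((x ⬝ᵥ A *ᵥ v) * gaussianWeight A x)) x v := by
  classical
  have symm : v ⬝ᵥ A *ᵥ x = x ⬝ᵥ A *ᵥ v := by
    rw [Matrix.dotProduct_mulVec, ← Matrix.mulVec_transpose, hA.eq, dotProduct_comm]
  have hasLineDerivAt_form : HasLineDerivAt ℝ (fun y => y ⬝ᵥ A *ᵥ y) (2 * (x ⬝ᵥ A *ᵥ v)) x v := by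
    have := (LinearMap.BilinMap.toQuadraticMap (Matrix.toLinearMap₂' ℝ A)).hasLineDerivAt x v
    rw [LinearMap.BilinMap.polar_toQuadraticMap] at this
    simpa only [HasLineDerivAt, LinearMap.BilinMap.toQuadraticMap_apply,
      Matrix.toLinearMap₂'_apply', symm, ← two_mul] using this
  refine (HasDerivAt.const_mul (-(1 / 2)) hasLineDerivAt_form).exp.congr_deriv ?_
  simp only [zero_smul, add_zero, gaussianWeight]
  ring

lemma integral_mul_dotProduct_mul_gaussianWeight {A : Matrix ι ι ℝ} (hA : A.IsSymm)
    {f f' : (ι → ℝ) → ℝ} {v : ι → ℝ} (hf : ∀ x, HasLineDerivAt ℝ f (f' x) x v)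
    (hf_int : Integrable fun x => f x * gaussianWeight A x)
    (hf'_int : Integrable fun x => f' x * gaussianWeight A x)
    (hfv_int : Integrable fun x => f x * ((x ⬝ᵥ A *ᵥ v) * gaussianWeight A x)) :
    ∫ x, f x * ((x ⬝ᵥ A *ᵥ v) * gaussianWeight A x) = ∫ x, f' x * gaussianWeight A x := by
  have := integral_bilinear_hasLineDerivAt_right_eq_neg_left_of_integrable
    (B := ContinuousLinearMap.mul ℝ ℝ) hf'_int (by simpa using hfv_int.neg) hf_int
    (fun x _ => hf x) (fun x _ => hasLineDerivAt_gaussianWeight hA x v)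
  simpa [integral_neg] using this

lemma dotProduct_mulVec_inv_row [DecidableEq ι] {A : Matrix ι ι ℝ} (hA : A.IsSymm)
    (hdet : IsUnit A.det) (x : ι → ℝ) (a : ι) : x ⬝ᵥ A *ᵥ A⁻¹ a = x a := by
  have mulVec_inv_row : A *ᵥ A⁻¹ a = Pi.single a 1 := by
    rw [← hA.eq, Matrix.mulVec_transpose, hA.eq, ← Matrix.mul_apply_eq_vecMul,
      A.nonsing_inv_mul hdet]
    ext b
    simp [Matrix.one_apply, Pi.single_apply, eq_comm]
  rw [mulVec_inv_row, dotProduct_single_one]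

lemma gaussianMoment_eq_sum_contractions [DecidableEq ι] {A : Matrix ι ι ℝ} (hA : A.PosDef)
    {m : ℕ} (μ : Fin (m + 2) → ι) : gaussianMoment A μ =
      ∑ j : Fin (m + 1), A⁻¹ (μ 0) (μ j.succ) *
        gaussianMoment A fun i => μ (j.succAbove i).succ := by
  have hsymm : A.IsSymm := hA.isHermitian
  have hdet : IsUnit A.det := A.isUnit_iff_isUnit_det.1 hA.isUnit
  set v : ι → ℝ := A⁻¹ (μ 0)
  have mul_prod_succ (x : ι → ℝ) : (∏ i : Fin (m + 1), x (μ i.succ)) *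
      ((x ⬝ᵥ A *ᵥ v) * gaussianWeight A x) = (∏ i, x (μ i)) * gaussianWeight A x := by
    rw [dotProduct_mulVec_inv_row hsymm hdet, Fin.prod_univ_succ fun i => x (μ i)]
    ring
  have integrable_contraction (j : Fin (m + 1)) : Integrable fun x : ι → ℝ =>
      v (μ j.succ) * ((∏ i, x (μ (j.succAbove i).succ)) * gaussianWeight A x) :=
    (integrable_prod_mul_gaussianWeight hA _).const_mul _
  calc gaussianMoment A μ
      = ∫ x : ι → ℝ, (∏ i : Fin (m + 1), x (μ i.succ)) *
          ((x ⬝ᵥ A *ᵥ v) * gaussianWeight A x) := by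
        simp only [mul_prod_succ, gaussianMoment]
    _ = ∫ x : ι → ℝ, (∑ j : Fin (m + 1), v (μ j.succ) * ∏ i, x (μ (j.succAbove i).succ)) *
          gaussianWeight A x := by
        apply integral_mul_dotProduct_mul_gaussianWeight hsymm
          fun x => hasLineDerivAt_prod_apply (fun i => μ i.succ) x v
        · exact integrable_prod_mul_gaussianWeight hA _
        · simpa only [Finset.sum_mul, mul_assoc] using
            integrable_finsetSum _ fun j _ => integrable_contraction j
        · simpa only [mul_prod_succ] using integrable_prod_mul_gaussianWeight hA μ
    _ = ∑ j : Fin (m + 1), v (μ j.succ) *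
          gaussianMoment A (fun i => μ (j.succAbove i).succ) := by
        simp only [Finset.sum_mul, mul_assoc]
        rw [integral_finsetSum _ fun j _ => integrable_contraction j]
        simp only [integral_const_mul, gaussianMoment]

lemma wickRecursion_gaussianMoment [DecidableEq ι] {A : Matrix ι ι ℝ} (hA : A.PosDef) :
    WickRecursion A⁻¹ fun _ => gaussianMoment A where
  comp_perm μ P := integral_congr_ae <| .of_forall fun x =>
    congrArg (· * gaussianWeight A x) (Equiv.prod_comp P fun i => x (μ i))
  contract_zero := gaussianMoment_eq_sum_contractions hA

theorem gaussian_wick_theorem_general [DecidableEq ι] {Q : Matrix ι ι ℝ} (hQ : Q.PosDef) {α : ℝ}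
    (hα : 0 < α) {k : ℕ} (μ : Fin (2 * k) → ι) :
    (∫ x, gaussianWeight (α • Q) x)⁻¹ * gaussianMoment (α • Q) μ =
      1 / (2 ^ k * k.factorial * α ^ k) * pairingSum Q⁻¹ μ := by
  have hαQ : (α • Q).PosDef := hQ.smul hα
  have hZ := (integral_gaussianWeight_pos hαQ).ne'
  have inv_smul : (α • Q)⁻¹ = α⁻¹ • Q⁻¹ :=
    Q.inv_smul' (Units.mk0 α hα.ne') (Q.isUnit_iff_isUnit_det.1 hQ.isUnit)
  have moment_zero : gaussianMoment (α • Q) Fin.elim0 = ∫ x, gaussianWeight (α • Q) x := by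
    simp [gaussianMoment]
  have wick := (wickRecursion_gaussianMoment hαQ).two_pow_mul_factorial_mul_eq_pairingSum_mul μ
  rw [inv_smul, pairingSum_smul, moment_zero, inv_pow] at wick
  field_simp at wick ⊢
  linear_combination wick

end Gaussian

/-- Wick's theorem: the Gaussian moment of order `2k` is
`⟨x^{μ₁} ⋯ x^{μ_{2k}}⟩ = (1/(2^k k! α^k)) ∑_{P ∈ S_{2k}}
  (Q⁻¹)^{μ_{P(1)} μ_{P(2)}} ⋯ (Q⁻¹)^{μ_{P(2k-1)} μ_{P(2k)}}`. -/
theorem gaussian_wick_theorem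
    (n : ℕ) (α : ℝ) (hα : 0 < α) (Q : Matrix (Fin n) (Fin n) ℝ)
    (hQsymm : Q.IsSymm) (hQ : Q.PosDef)
    (k : ℕ) (μ : Fin (2 * k) → Fin n) :
    (∫ x : Fin n → ℝ, Real.exp (-(α / 2) * ∑ a, ∑ b, Q a b * x a * x b))⁻¹ *
      (∫ x : Fin n → ℝ,
        (∏ i, x (μ i)) * Real.exp (-(α / 2) * ∑ a, ∑ b, Q a b * x a * x b))
    = (1 / ((2 : ℝ) ^ k * (Nat.factorial k : ℝ) * α ^ k)) *
      ∑ P : Equiv.Perm (Fin (2 * k)), ∏ j : Fin k,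
        Q⁻¹ (μ (P ⟨2 * (j : ℕ), by have := j.isLt; omega⟩))
            (μ (P ⟨2 * (j : ℕ) + 1, by have := j.isLt; omega⟩)) := by
  simpa only [gaussianMoment, gaussianWeight_smul, pairingSum] using
    gaussian_wick_theorem_general hQ hα μ
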